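/- Let U ⊆ ℂ be open, f holomorphic on U, and suppose γ ∈ U satisfies f'(γ) = 0 and f''(γ) ≠ 0. Then for every sufficiently small closed disk D ⊆ U centered at γ and every t in a punctured interval (Re f(γ), Re f(γ) + ε), the sublevel set {z ∈ D : Re f(z) ≤ t} deformation retracts onto a set whose relative homology H_*(sublevel set at t, sublevel set at Re f(γ) − δ) is concentrated in degree 1 with rank 1. -/

import Mathlib

open Complex Set

/-- Holomorphic Morse lemma. -/
theorem morse_aux (U : Set ℂ) (hU : IsOpen U) (f : ℂ → ℂ)
    (hf : DifferentiableOn ℂ f U) (γ : ℂ) (hγ : γ ∈ U)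
    (h1 : deriv f γ = 0) (h2 : deriv (deriv f) γ ≠ 0) :
    ∃ φ : ℂ → ℂ, ∃ a : ℂ, a ≠ 0 ∧ φ γ = 0 ∧ HasStrictDerivAt φ a γ ∧
      ∀ᶠ z in nhds γ, f z = f γ + φ z ^ 2 := by
  have han : AnalyticAt ℂ f γ := hf.analyticAt (hU.mem_nhds hγ)
  have o1 : analyticOrderAt (deriv f) γ = 1 :=
    han.deriv.analyticOrderAt_eq_one_of_zero_deriv_ne_zero h1 h2
  have o2 : analyticOrderAt (f · - f γ) γ = (2 : ℕ) := by
    rw [← han.analyticOrderAt_deriv_add_one, o1]; norm_num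
  have han2 : AnalyticAt ℂ (f · - f γ) γ := by fun_prop
  obtain ⟨g, hg, hg0, hfg⟩ := (han2.analyticOrderAt_eq_natCast).1 o2
  obtain ⟨k, hk⟩ := IsAlgClosed.exists_pow_nat_eq (g γ) (n := 2) (by norm_num)
  have hk0 : k ≠ 0 := by
    rintro rfl
    apply hg0
    rw [← hk]; norm_num
  let q : ℂ → ℂ := fun z => k * (g z / g γ) ^ (((2 : ℕ) : ℂ)⁻¹)
  have hq : AnalyticAt ℂ q γ := by
    refine analyticAt_const.mul (AnalyticAt.cpow (hg.div analyticAt_const hg0) analyticAt_const ?_)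
    rw [div_self hg0]
    exact one_mem_slitPlane
  have hqk : q γ = k := by simp [q, div_self hg0]
  have hqs : ∀ z, q z ^ 2 = g z := by
    intro z
    simp only [q]
    rw [mul_pow, cpow_nat_inv_pow _ (by norm_num), hk]
    field_simp
  refine ⟨fun z => (z - γ) * q z, k, hk0, by simp, ?_, ?_⟩
  · have h0 : HasStrictDerivAt (fun z : ℂ => z - γ) 1 γ := (hasStrictDerivAt_id γ).sub_const γ
    have := h0.mul hq.hasStrictDerivAt
    simp only [sub_self, zero_mul, add_zero, one_mul, hqk] at this
    exact this
  · filter_upwards [hfg] with z hz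
    rw [mul_pow, hqs, ← smul_eq_mul, ← hz]
    ring

theorem real_aux (x y u a c d e : ℝ) (hu : 0 ≤ x * u) (hy : y ^ 2 ≤ 4 * x ^ 2)
    (h1 : a ^ 2 + c ^ 2 ≤ (1 / 10) ^ 2 * (x ^ 2 + y ^ 2))
    (h2 : d ^ 2 + e ^ 2 ≤ (1 / 10) ^ 2 * u ^ 2) :
    0 ≤ (x + a) * (u + d) + (y + c) * e := by
  have hX := abs_nonneg x
  have hV := abs_nonneg u
  have hxu : x * u = |x| * |u| := by rw [← abs_mul, abs_of_nonneg hu]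
  have hy' : |y| ≤ 2 * |x| := abs_le_of_sq_le_sq (by rw [mul_pow, sq_abs]; linarith) (by positivity)
  have ha : |a| ≤ 3 / 10 * |x| := abs_le_of_sq_le_sq (by rw [mul_pow, sq_abs]; nlinarith [sq_nonneg c]) (by positivity)
  have hc : |c| ≤ 3 / 10 * |x| := abs_le_of_sq_le_sq (by rw [mul_pow, sq_abs]; nlinarith [sq_nonneg a]) (by positivity)
  have hd : |d| ≤ 1 / 10 * |u| := abs_le_of_sq_le_sq (by rw [mul_pow, sq_abs]; nlinarith [sq_nonneg e]) (by positivity)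
  have he : |e| ≤ 1 / 10 * |u| := abs_le_of_sq_le_sq (by rw [mul_pow, sq_abs]; nlinarith [sq_nonneg d]) (by positivity)
  have k1 : |x * d| ≤ |x| * (1 / 10 * |u|) := by rw [abs_mul]; gcongr
  have k2 : |a * u| ≤ (3 / 10 * |x|) * |u| := by rw [abs_mul]; gcongr
  have k3 : |a * d| ≤ (3 / 10 * |x|) * (1 / 10 * |u|) := by rw [abs_mul]; gcongr
  have k4 : |y * e| ≤ (2 * |x|) * (1 / 10 * |u|) := by rw [abs_mul]; gcongr
  have k5 : |c * e| ≤ (3 / 10 * |x|) * (1 / 10 * |u|) := by rw [abs_mul]; gcongr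
  have := mul_nonneg hX hV
  have := (abs_le.1 k1).1
  have := (abs_le.1 k2).1
  have := (abs_le.1 k3).1
  have := (abs_le.1 k4).1
  have := (abs_le.1 k5).1
  nlinarith

/-- Horizontal moves toward the axis in the Morse chart do not leave the disk. -/
theorem dist_aux (ψ : ℂ → ℂ) (b : ℂ) (hb : b ≠ 0) (h : HasStrictDerivAt ψ b 0) :
    ∃ ρ > 0, ∀ w₀ ∈ Metric.ball (0:ℂ) ρ, ∀ w₁ ∈ Metric.ball (0:ℂ) ρ, w₀.im = w₁.im →
      0 ≤ w₁.re * (w₀.re - w₁.re) → w₁.im ^ 2 ≤ 4 * w₁.re ^ 2 →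
      dist (ψ w₁) (ψ 0) ≤ dist (ψ w₀) (ψ 0) := by
  have hb' : 0 < ‖b‖ := by positivity
  obtain ⟨S, hS, hS'⟩ := h.hasStrictFDerivAt.approximates_deriv_on_nhds
    (c := ‖b‖₊ / 10) (Or.inr (div_pos (nnnorm_pos.2 hb) (by norm_num)))
  obtain ⟨ρ, hρ, hρS⟩ := Metric.mem_nhds_iff.1 hS
  have key : ∀ w ∈ Metric.ball (0:ℂ) ρ, ∀ w' ∈ Metric.ball (0:ℂ) ρ,
      ∃ E : ℂ, ψ w - ψ w' = b * (w - w' + E) ∧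
        E.re ^ 2 + E.im ^ 2 ≤ (1 / 10) ^ 2 * ((w - w').re ^ 2 + (w - w').im ^ 2) := by
    intro w hw w' hw'
    have e1 := hS' w (hρS hw) w' (hρS hw')
    refine ⟨(ψ w - ψ w' - (w - w') * b) / b, by field_simp; ring, ?_⟩
    have e2 : ‖(ψ w - ψ w' - (w - w') * b) / b‖ ≤ 1 / 10 * ‖w - w'‖ := by
      rw [norm_div, div_le_iff₀ hb']
      simp at e1
      linarith
    have e3 := pow_le_pow_left₀ (norm_nonneg _) e2 2
    rw [mul_pow, Complex.sq_norm, Complex.sq_norm, normSq_apply, normSq_apply] at e3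
    nlinarith
  refine ⟨ρ, hρ, fun w₀ h0 w₁ h1 him hre hy => ?_⟩
  obtain ⟨E, hE, hE'⟩ := key w₁ h1 0 (Metric.mem_ball_self hρ)
  obtain ⟨G, hG, hG'⟩ := key w₀ h0 w₁ h1
  have hs : ψ w₀ - ψ 0 = b * (w₁ + E + (w₀ - w₁ + G)) := by
    have : ψ w₀ - ψ 0 = (ψ w₀ - ψ w₁) + (ψ w₁ - ψ 0) := by ring
    rw [this, hE, hG]; ring
  rw [dist_eq, dist_eq, hs, hE, norm_mul, norm_mul, sub_zero]
  gcongr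
  rw [← sq_le_sq₀ (norm_nonneg _) (norm_nonneg _), Complex.sq_norm, Complex.sq_norm, normSq_apply,
    normSq_apply]
  simp only [sub_zero, sub_re, sub_im, him, sub_self] at hE' hG'
  have := real_aux w₁.re w₁.im (w₀.re - w₁.re) E.re E.im G.re G.im hre hy hE' (by linarith)
  simp only [add_re, add_im, sub_re, sub_im, him]
  nlinarith [sq_nonneg (w₀.re - w₁.re + G.re), sq_nonneg G.im]

theorem clamp_aux (x m s : ℝ) (hm : 0 ≤ m) (hs : s ∈ Icc (0:ℝ) 1) :
    (|x| ≤ m ∧ max (-m) (min m x) = x) ∨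
    (m < |x| ∧ |max (-m) (min m x)| = m ∧ m ≤ |(1 - s) * x + s * max (-m) (min m x)| ∧
      |(1 - s) * x + s * max (-m) (min m x)| ≤ |x| ∧
      0 ≤ ((1 - s) * x + s * max (-m) (min m x)) *
        (x - ((1 - s) * x + s * max (-m) (min m x)))) := by
  obtain ⟨h0, h1⟩ := hs
  rcases le_or_gt |x| m with h | h
  · left
    obtain ⟨ha, hb⟩ := abs_le.1 h
    exact ⟨h, by rw [min_eq_right hb, max_eq_right ha]⟩
  · right
    refine ⟨h, ?_⟩
    rcases lt_abs.1 h with h | h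
    · rw [min_eq_left h.le, max_eq_right (by linarith)]
      have a1 : m ≤ (1 - s) * x + s * m := by nlinarith
      have a2 : (1 - s) * x + s * m ≤ x := by nlinarith
      rw [abs_of_nonneg hm, abs_of_nonneg (hm.trans a1), abs_of_nonneg (by linarith : 0 ≤ x)]
      exact ⟨rfl, a1, a2, mul_nonneg (by linarith) (by linarith)⟩
    · rw [min_eq_right (by linarith), max_eq_left (by linarith)]
      have a1 : (1 - s) * x + s * (-m) ≤ -m := by nlinarith
      have a2 : x ≤ (1 - s) * x + s * (-m) := by nlinarith
      rw [abs_neg, abs_of_nonneg hm, abs_of_nonpos (by linarith : (1 - s) * x + s * (-m) ≤ 0),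
        abs_of_nonpos (by linarith : x ≤ 0)]
      exact ⟨rfl, by linarith, by linarith, mul_nonneg_of_nonpos_of_nonpos (by linarith) (by linarith)⟩




/-- Let `U ⊆ ℂ` be open, `f` holomorphic on `U`, and suppose
`γ ∈ U` satisfies `f'(γ) = 0` and `f''(γ) ≠ 0`. Then for every sufficiently
small closed disk `D ⊆ U` centered at `γ` and every `t` in a punctured
interval `(Re f(γ), Re f(γ) + ε)`, the sublevel set `{z ∈ D : Re f(z) ≤ t}`
deformation retracts onto a set obtained from the lower sublevel set
`B = {Re f ≤ Re f(γ) − δ}` by attaching a single (embedded) 1-cell whose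
interior is disjoint from `B`; consequently the relative homology
`H_*(sublevel at t, sublevel at Re f(γ) − δ)` is concentrated in degree 1 with
rank 1. (The relative homology statement is rendered by the explicit
one-cell-attachment deformation retraction.) -/
theorem stmt9 (U : Set ℂ) (hU : IsOpen U) (f : ℂ → ℂ)
    (hf : DifferentiableOn ℂ f U) (γ : ℂ) (hγ : γ ∈ U)
    (h1 : deriv f γ = 0) (h2 : deriv (deriv f) γ ≠ 0) :
    ∃ r₀ > 0, ∀ r : ℝ, 0 < r → r ≤ r₀ →
      Metric.closedBall γ r ⊆ U ∧
      ∃ ε > 0, ∃ δ > 0, ∀ t : ℝ, (f γ).re < t → t < (f γ).re + ε →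
        -- `A` is the sublevel set at `t`, `B` the sublevel set at `Re f(γ) − δ`
        let A : Set ℂ := {z ∈ Metric.closedBall γ r | (f z).re ≤ t}
        let B : Set ℂ := {z ∈ Metric.closedBall γ r | (f z).re ≤ (f γ).re - δ}
        ∃ e : ℝ → ℂ,
          ContinuousOn e (Icc 0 1) ∧ InjOn e (Icc 0 1) ∧
          e '' Icc 0 1 ⊆ A ∧ e 0 ∈ B ∧ e 1 ∈ B ∧
          (∀ s ∈ Ioo (0:ℝ) 1, e s ∉ B) ∧
          -- the sublevel set `A` deformation retracts onto `B ∪ (1-cell)`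
          ∃ H : ℝ × ℂ → ℂ,
            ContinuousOn H (Icc (0:ℝ) 1 ×ˢ A) ∧
            (∀ z ∈ A, H (0, z) = z) ∧
            (∀ z ∈ A, H (1, z) ∈ B ∪ e '' Icc 0 1) ∧
            (∀ s ∈ Icc (0:ℝ) 1, ∀ z ∈ A, H (s, z) ∈ A) ∧
            (∀ s ∈ Icc (0:ℝ) 1, ∀ z ∈ B ∪ e '' Icc 0 1, H (s, z) = z) := by
  obtain ⟨φ, a, ha, hφ0, hφ, hfφ⟩ := morse_aux U hU f hf γ hγ h1 h2
  have hφe := hφ.hasStrictFDerivAt_equiv ha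
  obtain ⟨Φ, hΦ, hγs⟩ : ∃ Φ : OpenPartialHomeomorph ℂ ℂ, (Φ : ℂ → ℂ) = φ ∧ γ ∈ Φ.source :=
    ⟨hφe.toOpenPartialHomeomorph φ, rfl, hφe.mem_toOpenPartialHomeomorph_source⟩
  subst hΦ
  have hs0 : Φ.symm 0 = γ := by rw [← hφ0, Φ.left_inv hγs]
  have h0t : (0:ℂ) ∈ Φ.target := by rw [← hφ0]; exact Φ.map_source hγs
  have hψ : HasStrictDerivAt Φ.symm a⁻¹ 0 :=
    Φ.hasStrictDerivAt_symm h0t ha (by rw [hs0]; exact hφ)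
  obtain ⟨ρ₁, hρ₁, hdist⟩ := dist_aux Φ.symm a⁻¹ (inv_ne_zero ha) hψ
  obtain ⟨ρ₂, hρ₂, hρ₂t⟩ := Metric.mem_nhds_iff.1 (Φ.open_target.mem_nhds h0t)
  obtain ⟨ρ, hρ, hρle1, hρle2⟩ : ∃ ρ > 0, ρ ≤ ρ₁ ∧ ρ ≤ ρ₂ :=
    ⟨min ρ₁ ρ₂, lt_min hρ₁ hρ₂, min_le_left _ _, min_le_right _ _⟩
  have hρt : Metric.ball (0:ℂ) ρ ⊆ Φ.target := (Metric.ball_subset_ball hρle2).trans hρ₂t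
  replace hdist : ∀ w₀ ∈ Metric.ball (0:ℂ) ρ, ∀ w₁ ∈ Metric.ball (0:ℂ) ρ, w₀.im = w₁.im →
      0 ≤ w₁.re * (w₀.re - w₁.re) → w₁.im ^ 2 ≤ 4 * w₁.re ^ 2 →
      dist (Φ.symm w₁) γ ≤ dist (Φ.symm w₀) γ := by
    intro w₀ hw₀ w₁ hw₁
    have := hdist w₀ (Metric.ball_subset_ball hρle1 hw₀) w₁ (Metric.ball_subset_ball hρle1 hw₁)
    rwa [hs0] at this
  have hcont : ContinuousAt Φ γ := Φ.continuousAt hγs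
  have hev : ∀ᶠ z in nhds γ, z ∈ U ∧ z ∈ Φ.source ∧ Φ z ∈ Metric.ball (0:ℂ) ρ ∧
      f z = f γ + Φ z ^ 2 := by
    have hb : Metric.ball (0:ℂ) ρ ∈ nhds (Φ γ) := by rw [hφ0]; exact Metric.ball_mem_nhds _ hρ
    filter_upwards [hU.mem_nhds hγ, Φ.open_source.mem_nhds hγs, hcont hb, hfφ] with z z1 z2 z3 z4
    exact ⟨z1, z2, z3, z4⟩
  obtain ⟨r₀, hr₀, hball⟩ := Metric.nhds_basis_closedBall.mem_iff.1 hev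
  refine ⟨r₀, hr₀, fun r hr hrr => ?_⟩
  have hD : ∀ z ∈ Metric.closedBall γ r, z ∈ U ∧ z ∈ Φ.source ∧ Φ z ∈ Metric.ball (0:ℂ) ρ ∧
      f z = f γ + Φ z ^ 2 := fun z hz => hball (Metric.closedBall_subset_closedBall hrr hz)
  refine ⟨fun z hz => (hD z hz).1, ?_⟩
  -- real part in the Morse chart
  have hre : ∀ z ∈ Metric.closedBall γ r, (f z).re = (f γ).re + ((Φ z).re ^ 2 - (Φ z).im ^ 2) := by
    intro z hz
    rw [(hD z hz).2.2.2, add_re, sq, mul_re]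
    ring
  have hψc : ContinuousAt Φ.symm 0 := Φ.symm.continuousAt h0t
  have hψb : Φ.symm ⁻¹' Metric.closedBall γ r ∈ nhds (0:ℂ) :=
    hψc (by rw [hs0]; exact Metric.closedBall_mem_nhds _ hr)
  obtain ⟨κ', hκ', hκb'⟩ := Metric.mem_nhds_iff.1 hψb
  obtain ⟨κ, hκ, hκle, hκρ⟩ : ∃ κ > 0, κ ≤ κ' ∧ κ ≤ ρ :=
    ⟨min κ' ρ, lt_min hκ' hρ, min_le_left _ _, min_le_right _ _⟩
  have hκb : ∀ w ∈ Metric.ball (0:ℂ) κ, Φ.symm w ∈ Metric.closedBall γ r :=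
    fun w hw => hκb' (Metric.ball_subset_ball hκle hw)
  have hmem : ∀ {w : ℂ} {R : ℝ}, 0 < R → (w ∈ Metric.ball (0:ℂ) R ↔ w.re ^ 2 + w.im ^ 2 < R ^ 2) := by
    intro w R hR
    rw [mem_ball_zero_iff, ← sq_lt_sq₀ (norm_nonneg _) hR.le, Complex.sq_norm, normSq_apply, ← sq, ← sq]
  obtain ⟨δ, hδ, hδκ⟩ : ∃ δ > 0, 4 * δ = κ ^ 2 := ⟨κ ^ 2 / 4, by positivity, by ring⟩
  refine ⟨δ, hδ, δ, hδ, fun t ht ht' => ?_⟩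
  intro A B
  -- the vertical axis
  have hax : ∀ y : ℝ, y ^ 2 ≤ δ → (⟨0, y⟩ : ℂ) ∈ Metric.ball (0:ℂ) κ := by
    intro y hy
    rw [hmem hκ]
    simp only
    nlinarith
  have hκt : ∀ w ∈ Metric.ball (0:ℂ) κ, w ∈ Φ.target :=
    fun w hw => hρt (Metric.ball_subset_ball hκρ hw)
  have hsq : √δ ^ 2 = δ := Real.sq_sqrt hδ.le
  have hsq0 : 0 < √δ := Real.sqrt_pos.2 hδ
  let ℓ : ℝ → ℂ := fun s => ⟨0, √δ * (2 * s - 1)⟩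
  have hℓ : ∀ s ∈ Icc (0:ℝ) 1, ℓ s ∈ Metric.ball (0:ℂ) κ := by
    intro s hs
    apply hax
    have : (2 * s - 1) ^ 2 ≤ 1 := by nlinarith [hs.1, hs.2]
    rw [mul_pow, hsq]
    nlinarith
  have hℓc : Continuous ℓ := by
    have : ℓ = fun s => ((√δ * (2 * s - 1) : ℝ) : ℂ) * I := by
      funext s
      apply Complex.ext <;> simp [ℓ]
    rw [this]
    fun_prop
  have hℓre : ∀ s ∈ Icc (0:ℝ) 1, (f (Φ.symm (ℓ s))).re = (f γ).re - δ * (2 * s - 1) ^ 2 := by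
    intro s hs
    rw [hre _ (hκb _ (hℓ s hs)), Φ.right_inv (hκt _ (hℓ s hs))]
    simp only [ℓ]
    rw [mul_pow, hsq]
    ring
  -- the clamping map
  let m : ℂ → ℝ := fun w => √(w.im ^ 2 - δ)
  let P : ℝ × ℂ → ℂ := fun p =>
    ⟨(1 - p.1) * p.2.re + p.1 * max (-m p.2) (min (m p.2) p.2.re), p.2.im⟩
  have hm0 : ∀ w, 0 ≤ m w := fun w => Real.sqrt_nonneg _
  have hmc : Continuous m := by simp only [m]; fun_prop
  have hPc : Continuous P := by
    have : P = fun p => (((1 - p.1) * p.2.re + p.1 * max (-m p.2) (min (m p.2) p.2.re) : ℝ) : ℂ)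
        + (p.2.im : ℂ) * I := by
      funext p
      apply Complex.ext <;> simp [P]
    rw [this]
    fun_prop
  have hPabs : ∀ s ∈ Icc (0:ℝ) 1, ∀ w : ℂ, (P (s, w)).re ^ 2 ≤ w.re ^ 2 := by
    intro s hs w
    rw [sq_le_sq]
    rcases clamp_aux w.re (m w) s (hm0 w) hs with ⟨_, h⟩ | ⟨_, _, _, h, _⟩
    · simp only [P, h]
      apply le_of_eq
      congr 1
      ring
    · exact h
  have hPfix : ∀ s ∈ Icc (0:ℝ) 1, ∀ w : ℂ, |w.re| ≤ m w → P (s, w) = w := by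
    intro s hs w hw
    rcases clamp_aux w.re (m w) s (hm0 w) hs with ⟨_, h⟩ | ⟨h, _⟩
    · apply Complex.ext
      · simp only [P, h]; ring
      · rfl
    · exact absurd hw (not_le.2 h)
  have hPball : ∀ s ∈ Icc (0:ℝ) 1, ∀ w ∈ Metric.ball (0:ℂ) ρ, P (s, w) ∈ Metric.ball (0:ℂ) ρ := by
    intro s hs w hw
    rw [hmem hρ] at hw ⊢
    have := hPabs s hs w
    have h' : (P (s, w)).im = w.im := rfl
    rw [h']
    linarith
  have hPD : ∀ s ∈ Icc (0:ℝ) 1, ∀ z ∈ A, Φ.symm (P (s, Φ z)) ∈ Metric.closedBall γ r := by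
    intro s hs z hz
    obtain ⟨hzD, hzt⟩ := hz
    have hzt2 := hre z hzD
    obtain ⟨-, hzs, hzρ, -⟩ := hD z hzD
    set w := Φ z with hw
    rcases clamp_aux w.re (m w) s (hm0 w) hs with ⟨h, _⟩ | ⟨_, _, hge, _, hpos⟩
    · rw [hPfix s hs w h, hw, Φ.left_inv hzs]
      exact hzD
    · have hP2 := hPabs s hs w
      rcases le_or_gt (3 * w.im ^ 2) (4 * δ) with hsm | hbig
      · apply hκb
        rw [hmem hκ]
        have h' : (P (s, w)).im = w.im := rfl
        rw [h']
        nlinarith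
      · have hd := hdist w hzρ (P (s, w)) (hPball s hs w hzρ) rfl hpos ?_
        · rw [hw, Φ.left_inv hzs] at hd
          exact Metric.mem_closedBall.2 (hd.trans (Metric.mem_closedBall.1 hzD))
        · have h' : (P (s, w)).im = w.im := rfl
          rw [h']
          have hm2 : m w ^ 2 = w.im ^ 2 - δ := Real.sq_sqrt (by linarith)
          have h3 : m w ^ 2 ≤ (P (s, w)).re ^ 2 := by
            rw [← sq_abs (P (s, w)).re]
            exact pow_le_pow_left₀ (hm0 w) hge 2
          linarith
  have hPre : ∀ s ∈ Icc (0:ℝ) 1, ∀ z ∈ A, (f (Φ.symm (P (s, Φ z)))).re =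
      (f γ).re + ((P (s, Φ z)).re ^ 2 - (Φ z).im ^ 2) := by
    intro s hs z hz
    rw [hre _ (hPD s hs z hz), Φ.right_inv (hρt (hPball s hs _ (hD z hz.1).2.2.1))]
  refine ⟨fun s => Φ.symm (ℓ s), ?_, ?_, ?_, ?_, ?_, ?_, fun p => Φ.symm (P (p.1, Φ p.2)),
    ?_, ?_, ?_, ?_, ?_⟩
  · exact Φ.continuousOn_symm.comp hℓc.continuousOn fun s hs => hκt _ (hℓ s hs)
  · intro s hs s' hs' h
    have h' := Φ.symm.injOn (hκt _ (hℓ s hs)) (hκt _ (hℓ s' hs')) h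
    have h3 := congrArg Complex.im h'
    simp only [ℓ] at h3
    have := mul_left_cancel₀ hsq0.ne' h3
    linarith
  · rintro _ ⟨s, hs, rfl⟩
    refine ⟨hκb _ (hℓ s hs), ?_⟩
    show (f (Φ.symm (ℓ s))).re ≤ t
    rw [hℓre s hs]
    nlinarith [mul_nonneg hδ.le (sq_nonneg (2 * s - 1))]
  · have hs : (0:ℝ) ∈ Icc (0:ℝ) 1 := by simp
    refine ⟨hκb _ (hℓ 0 hs), ?_⟩
    show (f (Φ.symm (ℓ 0))).re ≤ _
    rw [hℓre 0 hs]
    apply le_of_eq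
    ring
  · have hs : (1:ℝ) ∈ Icc (0:ℝ) 1 := by simp
    refine ⟨hκb _ (hℓ 1 hs), ?_⟩
    show (f (Φ.symm (ℓ 1))).re ≤ _
    rw [hℓre 1 hs]
    apply le_of_eq
    ring
  · rintro s hs ⟨-, hB⟩
    have hB' : (f (Φ.symm (ℓ s))).re ≤ (f γ).re - δ := hB
    rw [hℓre s (Ioo_subset_Icc_self hs)] at hB'
    have : (2 * s - 1) ^ 2 < 1 := by nlinarith [hs.1, hs.2]
    nlinarith
  · refine Φ.continuousOn_symm.comp (t := Φ.target) (hPc.comp_continuousOn ?_) ?_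
    · refine continuousOn_fst.prodMk (Φ.continuousOn.comp continuousOn_snd ?_)
      rintro ⟨s, z⟩ ⟨_, hz⟩
      exact (hD z hz.1).2.1
    · rintro ⟨s, z⟩ ⟨hs, hz⟩
      exact hρt (hPball s hs _ (hD z hz.1).2.2.1)
  · intro z hz
    have : P (0, Φ z) = Φ z := by
      apply Complex.ext
      · simp [P]
      · rfl
    simp only [this]
    exact Φ.left_inv (hD z hz.1).2.1
  · intro z hz
    have hs : (1:ℝ) ∈ Icc (0:ℝ) 1 := by simp
    have hP1 : (P (1, Φ z)).re = max (-m (Φ z)) (min (m (Φ z)) (Φ z).re) := by simp [P]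
    have hP1m : |(P (1, Φ z)).re| ≤ m (Φ z) := by
      rw [hP1, abs_le]
      exact ⟨le_max_left _ _, max_le (by linarith [hm0 (Φ z)]) (min_le_left _ _)⟩
    rcases le_or_gt δ ((Φ z).im ^ 2) with h | h
    · left
      refine ⟨hPD 1 hs z hz, ?_⟩
      show (f (Φ.symm (P (1, Φ z)))).re ≤ _
      rw [hPre 1 hs z hz]
      have hm2 : m (Φ z) ^ 2 = (Φ z).im ^ 2 - δ := Real.sq_sqrt (by linarith)
      have := pow_le_pow_left₀ (abs_nonneg _) hP1m 2
      rw [sq_abs] at this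
      linarith
    · right
      have hmz : m (Φ z) = 0 := Real.sqrt_eq_zero_of_nonpos (by linarith)
      rw [hmz] at hP1m
      have hz0 : (P (1, Φ z)).re = 0 := abs_nonpos_iff.1 hP1m
      obtain ⟨hl, hu⟩ := abs_le.1 (abs_le_of_sq_le_sq' (a := (Φ z).im) (b := √δ)
        (by rw [hsq]; exact h.le) hsq0.le |> abs_le.2)
      refine ⟨((Φ z).im / √δ + 1) / 2, ⟨?_, ?_⟩, ?_⟩
      · have : -1 ≤ (Φ z).im / √δ := by rw [le_div_iff₀ hsq0]; linarith
        linarith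
      · have : (Φ z).im / √δ ≤ 1 := by rw [div_le_iff₀ hsq0]; linarith
        linarith
      · show Φ.symm _ = Φ.symm _
        congr 1
        apply Complex.ext
        · exact hz0.symm
        · show √δ * (2 * (((Φ z).im / √δ + 1) / 2) - 1) = (Φ z).im
          field_simp
          ring
  · intro s hs z hz
    refine ⟨hPD s hs z hz, ?_⟩
    show (f (Φ.symm (P (s, Φ z)))).re ≤ t
    rw [hPre s hs z hz]
    have h1 := hre z hz.1
    have h2 := hz.2
    have h3 := hPabs s hs (Φ z)
    linarith
  · rintro s hs z (hz | ⟨u, hu, rfl⟩)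
    · have h1 := hre z hz.1
      have h2 := hz.2
      have : P (s, Φ z) = Φ z := by
        apply hPfix s hs
        apply Real.le_sqrt_of_sq_le
        rw [sq_abs]
        linarith
      simp only [this]
      exact Φ.left_inv (hD z hz.1).2.1
    · have : P (s, Φ (Φ.symm (ℓ u))) = ℓ u := by
        rw [Φ.right_inv (hκt _ (hℓ u hu))]
        apply hPfix s hs
        simp only [ℓ, abs_zero]
        exact hm0 _
      simp only [this]
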